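/- Let f : ℝ^D → ℝ^H be piecewise affine with respect to a finite cover of ℝ^D by convex sets Q_1, …, Q_R, with affine pieces f(x) = V_l x + a_l on Q_l, and let x ∈ ℝ^D satisfy V_l x ≠ 0 for every l. Let ℓ > 0, let κ(u, v) = exp(−‖u − v‖²/(2ℓ²)) be the RBF kernel, fix inducing points φ_1, …, φ_K ∈ ℝ^H and a matrix C ∈ ℝ^{K×K}, and define σ(z) = κ(z, z) − Σ_{k,k'=1}^K κ(z, φ_k) C_{k k'} κ(z, φ_{k'}). Then σ(f(δ·x)) → κ(0, 0) = 1 as δ → ∞. -/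

import Mathlib

open Filter

open Bornology Metric Topology

/-!
Every affine piece `y ↦ V l y + a l` with `V l x ≠ 0` sends the ray `δ • x` to infinity. At each `δ`
the encoder agrees with one of finitely many pieces, so it sends the ray to infinity as well. There
the kernel against any fixed inducing point vanishes, and with it the correction to the prior
variance.
-/

/-- The predictive variance at `z` of a Gaussian process with kernel `κ` and inducing points `φ`.
For exact regression `C` would be the inverse of the noisy Gram matrix; here it is arbitrary. -/
def gpVariance {X m : Type*} [Fintype m] (κ : X → X → ℝ) (φ : m → X) (C : Matrix m m ℝ)
    (z : X) : ℝ :=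
  κ z z - ∑ k, ∑ k', κ z (φ k) * C k k' * κ z (φ k')

theorem tendsto_gpVariance {α X m : Type*} [Fintype m] {κ : X → X → ℝ} {φ : m → X} {l : Filter α}
    {z : α → X} {c : ℝ} (hdiag : Tendsto (fun i => κ (z i) (z i)) l (𝓝 c))
    (hφ : ∀ k, Tendsto (fun i => κ (z i) (φ k)) l (𝓝 0)) (C : Matrix m m ℝ) :
    Tendsto (fun i => gpVariance κ φ C (z i)) l (𝓝 c) := by
  have hterm (k k' : m) :
      Tendsto (fun i => κ (z i) (φ k) * C k k' * κ (z i) (φ k')) l (𝓝 0) := by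
    simpa only [zero_mul] using ((hφ k).mul_const (C k k')).mul (hφ k')
  have hsum : Tendsto (fun i => ∑ k, ∑ k', κ (z i) (φ k) * C k k' * κ (z i) (φ k')) l (𝓝 0) := by
    simpa only [Finset.sum_const_zero] using
      tendsto_finsetSum Finset.univ fun k _ => tendsto_finsetSum Finset.univ fun k' _ => hterm k k'
  simpa only [gpVariance, sub_zero] using hdiag.sub hsum

/-- The radial basis function (squared exponential) kernel with length scale `ℓ`, written with
`dist` so that it is available on any pseudometric space; for `ℓ = 0` it is constantly `1`. -/
noncomputable def rbfKernel {X : Type*} [PseudoMetricSpace X] (ℓ : ℝ) (u v : X) : ℝ :=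
  Real.exp (-dist u v ^ 2 / (2 * ℓ ^ 2))

section RBFKernel

variable {X : Type*} [PseudoMetricSpace X]

theorem rbfKernel_self (ℓ : ℝ) (u : X) : rbfKernel ℓ u u = 1 := by
  simp [rbfKernel]

theorem tendsto_rbfKernel_cobounded {ℓ : ℝ} (hℓ : ℓ ≠ 0) (v : X) :
    Tendsto (fun u => rbfKernel ℓ u v) (cobounded X) (𝓝 0) := by
  have hsq : Tendsto (fun u => dist u v ^ 2) (cobounded X) atTop :=
    (tendsto_pow_atTop two_ne_zero).comp (tendsto_dist_right_cobounded_atTop v)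
  have hpos : 0 < 2 * ℓ ^ 2 := by positivity
  exact Real.tendsto_exp_atBot.comp ((tendsto_neg_atTop_atBot.comp hsq).atBot_div_const hpos)

end RBFKernel

theorem tendsto_of_eventually_exists_eq {α β ι : Type*} [Finite ι] {l : Filter α} {l' : Filter β}
    {f : α → β} {g : ι → α → β} (hfg : ∀ᶠ a in l, ∃ i, f a = g i a)
    (hg : ∀ i, Tendsto (g i) l l') : Tendsto f l l' := by
  rw [tendsto_def]
  intro t ht
  filter_upwards [hfg, eventually_all.2 fun i => hg i ht] with a ⟨i, hi⟩ hmem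
  simpa only [Set.mem_preimage, hi] using hmem i

section Ray

variable {𝕜 E F ι : Type*} [NormedField 𝕜] [AddCommMonoid E] [Module 𝕜 E] [NormedAddCommGroup F]
  [NormedSpace 𝕜 F]

theorem tendsto_smul_const_cobounded {v : F} (hv : v ≠ 0) :
    Tendsto (fun δ : 𝕜 => δ • v) (cobounded 𝕜) (cobounded F) := by
  rw [← tendsto_norm_atTop_iff_cobounded]
  simpa only [norm_smul] using
    tendsto_norm_cobounded_atTop.atTop_mul_const (norm_pos_iff.2 hv)

variable [Finite ι] {Q : ι → Set E} {V : ι → E →ₗ[𝕜] F} {a : ι → F} {f : E → F} {x : E}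

theorem tendsto_piecewise_affine_smul_cobounded (hcover : ⋃ l, Q l = Set.univ)
    (hf : ∀ l, ∀ y ∈ Q l, f y = V l y + a l) (hx : ∀ l, V l x ≠ 0) :
    Tendsto (fun δ : 𝕜 => f (δ • x)) (cobounded 𝕜) (cobounded F) := by
  have hpiece (δ : 𝕜) : ∃ l, f (δ • x) = δ • V l x + a l := by
    obtain ⟨l, hl⟩ := Set.iUnion_eq_univ_iff.1 hcover (δ • x)
    exact ⟨l, by rw [hf l _ hl, map_smul]⟩
  exact tendsto_of_eventually_exists_eq (.of_forall hpiece) fun l =>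
    (tendsto_add_const_cobounded (a l)).comp (tendsto_smul_const_cobounded (hx l))

theorem dkl_rbf_variance_tendsto_prior_general {m : Type*} [Fintype m]
    (hcover : ⋃ l, Q l = Set.univ) (hf : ∀ l, ∀ y ∈ Q l, f y = V l y + a l)
    (hx : ∀ l, V l x ≠ 0) {κ : F → F → ℝ} {φ : m → F} {c : ℝ}
    (hdiag : Tendsto (fun z => κ z z) (cobounded F) (𝓝 c))
    (hφ : ∀ k, Tendsto (fun z => κ z (φ k)) (cobounded F) (𝓝 0)) (C : Matrix m m ℝ) :
    Tendsto (fun δ : 𝕜 => gpVariance κ φ C (f (δ • x))) (cobounded 𝕜) (𝓝 c) :=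
  have hray : Tendsto (fun δ : 𝕜 => f (δ • x)) (cobounded 𝕜) (cobounded F) :=
    tendsto_piecewise_affine_smul_cobounded hcover hf hx
  tendsto_gpVariance (z := fun δ : 𝕜 => f (δ • x)) (hdiag.comp hray)
    (fun k => (hφ k).comp hray) C

end Ray

/-- Theorem A.1 for the RBF kernel: the deep kernel learning predictive variance
reverts to the prior variance `κ 0 0 = 1` along rays `δ • x` as `δ → ∞`. -/
theorem dkl_rbf_variance_tendsto_prior
    (D H R K : ℕ)
    (Q : Fin R → Set (EuclideanSpace ℝ (Fin D)))
    (V : Fin R → (EuclideanSpace ℝ (Fin D) →ₗ[ℝ] EuclideanSpace ℝ (Fin H)))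
    (a : Fin R → EuclideanSpace ℝ (Fin H))
    (f : EuclideanSpace ℝ (Fin D) → EuclideanSpace ℝ (Fin H))
    (hconv : ∀ l, Convex ℝ (Q l))
    (hcover : (⋃ l, Q l) = Set.univ)
    (hf : ∀ l, ∀ x ∈ Q l, f x = V l x + a l)
    (x : EuclideanSpace ℝ (Fin D))
    (hx : ∀ l, V l x ≠ 0)
    (ℓ : ℝ) (hℓ : 0 < ℓ)
    (κ : EuclideanSpace ℝ (Fin H) → EuclideanSpace ℝ (Fin H) → ℝ)
    (hκ : ∀ u v, κ u v = Real.exp (-‖u - v‖ ^ 2 / (2 * ℓ ^ 2)))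
    (φ : Fin K → EuclideanSpace ℝ (Fin H))
    (C : Matrix (Fin K) (Fin K) ℝ)
    (σ : EuclideanSpace ℝ (Fin H) → ℝ)
    (hσ : ∀ z, σ z = κ z z - ∑ k : Fin K, ∑ k' : Fin K, κ z (φ k) * C k k' * κ z (φ k')) :
    Tendsto (fun δ : ℝ => σ (f (δ • x))) atTop (nhds (κ 0 0)) ∧ κ 0 0 = 1 := by
  obtain rfl : κ = rbfKernel ℓ := funext₂ fun u v => by rw [hκ, rbfKernel, dist_eq_norm]
  obtain rfl : σ = gpVariance (rbfKernel ℓ) φ C := funext hσ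
  exact ⟨(dkl_rbf_variance_tendsto_prior_general hcover hf hx
    (by simp only [rbfKernel_self, tendsto_const_nhds])
    (fun k => tendsto_rbfKernel_cobounded hℓ.ne' (φ k)) C).mono_left
      IsOrderBornology.atTop_le_cobounded, rbfKernel_self ℓ 0⟩
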